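/- Uniqueness of the best rational approximant: Let [A,B] be a real segment with A < B, let f : [A,B] → ℝ be continuous, and let m, n be nonnegative integers. If R₁ and R₂ are both best approximants of type (n,m) to f on [A,B], then R₁(x) = R₂(x) for every x ∈ [A,B]. -/

import Mathlib

/-- A rational function of type (n,m) on [A,B]. -/
def IsRatFun (A B : ℝ) (n m : ℕ) (R : ℝ → ℝ) : Prop :=
  ∃ P Q : Polynomial ℝ, P.natDegree ≤ n ∧ Q.natDegree ≤ m ∧
    (∀ x ∈ Set.Icc A B, Q.eval x ≠ 0) ∧
    ∀ x ∈ Set.Icc A B, R x = P.eval x / Q.eval x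

/-- R is a best approximant of type (n,m) to f on [A,B]. -/
def IsBestApprox (A B : ℝ) (n m : ℕ) (f R : ℝ → ℝ) : Prop :=
  IsRatFun A B n m R ∧
    ∀ S : ℝ → ℝ, IsRatFun A B n m S →
      (⨆ y : Set.Icc A B, |f y.1 - R y.1|) ≤ ⨆ y : Set.Icc A B, |f y.1 - S y.1|

/-!
If `R₁ = P₁ / Q₁` and `R₂ = P₂ / Q₂` are best approximants with positive denominators, so is the
mediant `R = (P₁ + P₂) / (Q₁ + Q₂)`, whose values lie strictly between those of `R₁` and `R₂`
wherever these differ. By strict convexity `R` can therefore attain its maximal error only at zeros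
of `R₁ - R`.

Write `R = P / Q` in lowest terms, and suppose that the numerator `w` of `R₁ - R` is not zero.
Coprimality of `P` and `Q` implies that every polynomial of degree at most `deg w` has the form
`p Q - P q` with `deg p ≤ n` and `deg q ≤ m`. Applied to a polynomial interpolating `f - R` at the
zeros of `w`, this gives a direction `(p, q)` such that, for small `t > 0`, the function
`(P + t p) / (Q + t q)` has a strictly smaller maximal error than `R`.
-/

open Polynomial Topology

section Polynomial

variable {k : Type*} [Field k]

theorem exists_mul_add_mul_eq_of_natDegree_le {U W g : k[X]} {n : ℕ} (hUW : IsCoprime U W)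
    (hW : W ≠ 0) (hU : U.natDegree ≤ n) (hg : g.natDegree ≤ n + W.natDegree) :
    ∃ p q : k[X], p.natDegree ≤ n ∧ q.natDegree ≤ W.natDegree ∧ p * W + q * U = g := by
  obtain ⟨a, b, hab⟩ := hUW
  obtain ⟨p, q, hq, hpq⟩ : ∃ p q : k[X], q.natDegree ≤ W.natDegree ∧ p * W + q * U = g :=
    ⟨g * b + g * a / W * U, g * a % W,
      natDegree_le_natDegree (EuclideanDomain.mod_lt (g * a) hW).le,
      by linear_combination U * EuclideanDomain.div_add_mod (g * a) W + g * hab⟩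
  refine ⟨p, q, ?_, hq, hpq⟩
  rcases eq_or_ne p 0 with rfl | hp
  · simp
  have hpW : (p * W).natDegree ≤ n + W.natDegree := by
    rw [eq_sub_of_add_eq hpq]
    exact natDegree_sub_le_of_le hg (natDegree_mul_le_of_le hq hU |>.trans_eq (add_comm _ _))
      |>.trans_eq (max_self _)
  rw [natDegree_mul hp hW] at hpW
  exact Nat.le_of_add_le_add_right hpW

theorem exists_mul_sub_mul_eq_of_natDegree_le {P Q P' Q' v : k[X]} {n m : ℕ}
    (hPQ : IsCoprime P Q) (hQ₀ : Q ≠ 0) (hP : P.natDegree ≤ n) (hQ : Q.natDegree ≤ m)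
    (hP' : P'.natDegree ≤ n) (hQ' : Q'.natDegree ≤ m)
    (hv : v.natDegree ≤ (P' * Q - P * Q').natDegree) :
    ∃ p q : k[X], p.natDegree ≤ n ∧ q.natDegree ≤ m ∧ p * Q - P * q = v := by
  have hP'Q : (P' * Q).natDegree ≤ n + Q.natDegree := natDegree_mul_le_of_le hP' le_rfl
  have hPQ' : (P * Q').natDegree ≤ m + P.natDegree :=
    (natDegree_mul_le_of_le le_rfl hQ').trans_eq (add_comm _ _)
  by_cases hvn : v.natDegree ≤ n + Q.natDegree
  · obtain ⟨p, q, hp, hq, rfl⟩ := exists_mul_add_mul_eq_of_natDegree_le hPQ hQ₀ hP hvn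
    exact ⟨p, -q, hp, by simpa using hq.trans hQ, by ring⟩
  · have hP₀ : P ≠ 0 := by
      rintro rfl
      exact hvn (hv.trans (by simpa using hP'Q))
    have hvm : v.natDegree ≤ m + P.natDegree := by
      have := hv.trans (natDegree_sub_le _ _)
      omega
    obtain ⟨q, p, hq, hp, rfl⟩ := exists_mul_add_mul_eq_of_natDegree_le hPQ.symm hP₀ hQ hvm
    exact ⟨p, -q, hp.trans hP, by simpa using hq, by ring⟩

theorem exists_natDegree_le_eval_eq_of_isRoot {w : k[X]} (hw : w ≠ 0) (φ : k → k) :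
    ∃ v : k[X], v.natDegree ≤ w.natDegree ∧ ∀ z, w.IsRoot z → v.eval z = φ z := by
  classical
  refine ⟨Lagrange.interpolate w.roots.toFinset id φ, natDegree_le_of_degree_le ?_, fun z hz => ?_⟩
  · calc
      _ ≤ (w.roots.toFinset.card : WithBot ℕ) :=
        (Lagrange.degree_interpolate_lt _ Function.injective_id.injOn).le
      _ ≤ w.natDegree :=
        mod_cast (Multiset.toFinset_card_le _).trans (card_roots' w)
  · exact Lagrange.eval_interpolate_at_node φ Function.injective_id.injOn (by simpa [hw] using hz)

end Polynomial

theorem add_div_add_mem_openSegment {k : Type*} [Field k] [LinearOrder k] [IsStrictOrderedRing k]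
    {a b c d : k} (hb : 0 < b) (hd : 0 < d) :
    (a + c) / (b + d) ∈ openSegment k (a / b) (c / d) := by
  refine ⟨b / (b + d), d / (b + d), by positivity, by positivity, by field_simp, ?_⟩
  simp only [smul_eq_mul]
  field_simp

theorem forall_pos_or_forall_neg_of_isPreconnected {X : Type*} [TopologicalSpace X]
    {K : Set X} {g : X → ℝ} (hK : IsPreconnected K) (hg : ContinuousOn g K)
    (hg₀ : ∀ x ∈ K, g x ≠ 0) :
    (∀ x ∈ K, 0 < g x) ∨ ∀ x ∈ K, g x < 0 :=
  (hK.eq_or_eq_neg_of_sq_eq hg hg.abs (fun x _ => (sq_abs (g x)).symm)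
      fun hx => abs_ne_zero.2 (hg₀ _ hx)).imp
    (fun h x hx => (abs_pos.2 (hg₀ x hx)).trans_eq (h hx).symm)
    fun h x hx => (h hx).trans_lt (neg_neg_of_pos (abs_pos.2 (hg₀ x hx)))

section Compact

variable {X : Type*} [TopologicalSpace X] {K : Set X}

theorem eventually_forall_add_mul_pos (hK : IsCompact K) {a b : X → ℝ} (ha : ContinuousOn a K)
    (hb : ContinuousOn b K) (ha₀ : ∀ x ∈ K, 0 ≤ a x) (hab : ∀ x ∈ K, a x = 0 → 0 < b x) :
    ∀ᶠ t : ℝ in 𝓝[>] 0, ∀ x ∈ K, 0 < a x + t * b x := by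
  have : CompactSpace K := isCompact_iff_compactSpace.1 hK
  have ha' : Continuous fun x : K => a x := continuousOn_iff_continuous_domRestrict.1 ha
  have hb' : Continuous fun x : K => b x := continuousOn_iff_continuous_domRestrict.1 hb
  have hnear : ∀ x : K, ∀ᶠ z : ℝ × K in 𝓝 (0, x), 0 < z.1 → 0 < a z.2 + z.1 * b z.2 := by
    intro x
    rcases (ha₀ x x.2).eq_or_lt with hax | hax
    · have hbx : ∀ᶠ z : ℝ × K in 𝓝 (0, x), 0 < b z.2 :=
        (hb'.comp continuous_snd).continuousAt.eventually_const_lt (hab x x.2 hax.symm)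
      filter_upwards [hbx] with z hz ht
      exact add_pos_of_nonneg_of_pos (ha₀ _ z.2.2) (mul_pos ht hz)
    · have hcont : Continuous fun z : ℝ × K => a z.2 + z.1 * b z.2 :=
        (ha'.comp continuous_snd).add (continuous_fst.mul (hb'.comp continuous_snd))
      filter_upwards [hcont.continuousAt.eventually_const_lt (by simpa using hax)] with z hz _
      exact hz
  have huniform := isCompact_univ.eventually_forall_of_forall_eventually
    (P := fun t (x : K) => 0 < t → 0 < a x + t * b x) fun x _ => hnear x
  filter_upwards [nhdsWithin_le_nhds huniform, self_mem_nhdsWithin] with t ht ht₀ x hx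
  exact ht ⟨x, hx⟩ trivial ht₀

section Perturbation

variable {f P Q p q : X → ℝ} {E : ℝ}

theorem eventually_forall_mul_sub_lt_of_sub_div_le (hK : IsCompact K) (hf : ContinuousOn f K)
    (hP : ContinuousOn P K) (hQ : ContinuousOn Q K) (hp : ContinuousOn p K)
    (hq : ContinuousOn q K) (hQ₀ : ∀ x ∈ K, 0 < Q x) (hle : ∀ x ∈ K, f x - P x / Q x ≤ E)
    (hdir : ∀ x ∈ K, f x - P x / Q x = E → 0 < p x * Q x - P x * q x) :
    ∀ᶠ t : ℝ in 𝓝[>] 0, ∀ x ∈ K,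
      f x * (Q x + t * q x) - (P x + t * p x) < E * (Q x + t * q x) := by
  have hslack : ∀ x ∈ K, E * Q x - (f x * Q x - P x) = (E - (f x - P x / Q x)) * Q x := by
    intro x hx
    have := (hQ₀ x hx).ne'
    field_simp
  -- Cleared of denominators, the slack in the error bound is affine in `t`.
  have hpos := eventually_forall_add_mul_pos hK (a := fun x => E * Q x - (f x * Q x - P x))
    (b := fun x => E * q x - (f x * q x - p x)) (by fun_prop) (by fun_prop)
    (fun x hx => hslack x hx ▸ mul_nonneg (sub_nonneg.2 (hle x hx)) (hQ₀ x hx).le) ?_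
  · filter_upwards [hpos] with t ht x hx
    linear_combination ht x hx
  · intro x hx hzero
    have hQx := hQ₀ x hx
    have hE : f x - P x / Q x = E := by
      rw [hslack x hx, mul_eq_zero, sub_eq_zero] at hzero
      exact (hzero.resolve_right hQx.ne').symm
    have hb : E * q x - (f x * q x - p x) = (p x * Q x - P x * q x) / Q x := by
      rw [← hE]
      field_simp
      ring
    exact hb ▸ div_pos (hdir x hx hE) hQx

theorem eventually_forall_abs_sub_div_lt (hK : IsCompact K) (hf : ContinuousOn f K)
    (hP : ContinuousOn P K) (hQ : ContinuousOn Q K) (hp : ContinuousOn p K)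
    (hq : ContinuousOn q K) (hQ₀ : ∀ x ∈ K, 0 < Q x) (hle : ∀ x ∈ K, |f x - P x / Q x| ≤ E)
    (hdir : ∀ x ∈ K, |f x - P x / Q x| = E →
      0 < (f x - P x / Q x) * (p x * Q x - P x * q x)) :
    ∀ᶠ t : ℝ in 𝓝[>] 0, ∀ x ∈ K,
      0 < Q x + t * q x ∧ |f x - (P x + t * p x) / (Q x + t * q x)| < E := by
  have hE : ∀ x ∈ K, 0 < E := by
    intro x hx
    refine ((abs_nonneg _).trans (hle x hx)).lt_of_ne' fun h => ?_
    have he : f x - P x / Q x = 0 := abs_nonpos_iff.1 (h ▸ hle x hx)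
    simpa [he] using hdir x hx (by rw [he, h, abs_zero])
  have hupper := eventually_forall_mul_sub_lt_of_sub_div_le hK hf hP hQ hp hq hQ₀
    (fun x hx => (abs_le.1 (hle x hx)).2) fun x hx h =>
      (mul_pos_iff_of_pos_left (hE x hx)).1 (h ▸ hdir x hx (by rw [h, abs_of_pos (hE x hx)]))
  have hneg : ∀ x, (-f) x - (-P) x / Q x = -(f x - P x / Q x) := fun x => by
    simp only [Pi.neg_apply]
    ring
  have hlower := eventually_forall_mul_sub_lt_of_sub_div_le (p := -p) hK hf.neg hP.neg hQ hp.neg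
    hq hQ₀ (fun x hx => hneg x ▸ neg_le.1 (abs_le.1 (hle x hx)).1) fun x hx h => by
      have he : f x - P x / Q x = -E := neg_eq_iff_eq_neg.1 (hneg x ▸ h)
      have := hdir x hx (by rw [he, abs_neg, abs_of_pos (hE x hx)])
      rw [he, neg_mul_comm, mul_pos_iff_of_pos_left (hE x hx)] at this
      simp only [Pi.neg_apply]
      linarith
  filter_upwards [hupper, hlower] with t hu hl x hx
  specialize hu x hx
  specialize hl x hx
  simp only [Pi.neg_apply] at hl
  have hden : 0 < Q x + t * q x := (mul_pos_iff_of_pos_left (hE x hx)).1 (by linarith)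
  refine ⟨hden, ?_⟩
  rw [sub_div' hden.ne', abs_div, abs_of_pos hden, div_lt_iff₀ hden, abs_lt]
  constructor <;> linarith

end Perturbation

end Compact

namespace IsRatFun

variable {A B E : ℝ} {n m : ℕ} {f R R₁ R₂ : ℝ → ℝ}

theorem continuousOn (hR : IsRatFun A B n m R) : ContinuousOn R (Set.Icc A B) := by
  obtain ⟨P, Q, -, -, hQ₀, hR⟩ := hR
  exact (P.continuousOn.div Q.continuousOn hQ₀).congr hR

theorem exists_isCoprime_pos (hAB : A ≤ B) (hR : IsRatFun A B n m R) :
    ∃ P Q : ℝ[X], P.natDegree ≤ n ∧ Q.natDegree ≤ m ∧ IsCoprime P Q ∧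
      (∀ x ∈ Set.Icc A B, 0 < Q.eval x) ∧ ∀ x ∈ Set.Icc A B, R x = P.eval x / Q.eval x := by
  obtain ⟨P, Q, hP, hQ, hQ₀, hR⟩ := hR
  have hQne : Q ≠ 0 := by
    rintro rfl
    exact hQ₀ A (Set.left_mem_Icc.2 hAB) eval_zero
  obtain ⟨p, q, c, hpq, rfl, rfl⟩ := UniqueFactorizationMonoid.exists_reduced_factors' P Q hQne
  simp only [eval_mul, mul_ne_zero_iff] at hQ₀ hR
  have hc : c ≠ 0 := left_ne_zero_of_mul hQne
  have hdeg : ∀ r : ℝ[X], r.natDegree ≤ (c * r).natDegree := fun r =>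
    natDegree_le_natDegree (mul_comm c r ▸ degree_le_mul_left r hc)
  have hp : p.natDegree ≤ n := (hdeg p).trans hP
  have hq : q.natDegree ≤ m := (hdeg q).trans hQ
  have hRpq : ∀ x ∈ Set.Icc A B, R x = p.eval x / q.eval x := fun x hx => by
    rw [hR x hx, mul_div_mul_left _ _ (hQ₀ x hx).1]
  rcases forall_pos_or_forall_neg_of_isPreconnected isPreconnected_Icc q.continuousOn
    fun x hx => (hQ₀ x hx).2 with hpos | hneg
  · exact ⟨p, q, hp, hq, hpq.isCoprime, hpos, hRpq⟩
  · exact ⟨-p, -q, by simpa, by simpa, hpq.isCoprime.neg_neg, by simpa using hneg,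
      by simpa using hRpq⟩

theorem exists_mem_openSegment (hAB : A ≤ B) (hR₁ : IsRatFun A B n m R₁)
    (hR₂ : IsRatFun A B n m R₂) :
    ∃ R, IsRatFun A B n m R ∧ ∀ x ∈ Set.Icc A B, R x ∈ openSegment ℝ (R₁ x) (R₂ x) := by
  obtain ⟨P₁, Q₁, hP₁, hQ₁, -, hpos₁, hR₁⟩ := hR₁.exists_isCoprime_pos hAB
  obtain ⟨P₂, Q₂, hP₂, hQ₂, -, hpos₂, hR₂⟩ := hR₂.exists_isCoprime_pos hAB
  refine ⟨fun x => (P₁ + P₂).eval x / (Q₁ + Q₂).eval x,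
    ⟨P₁ + P₂, Q₁ + Q₂, natDegree_add_le_of_degree_le hP₁ hP₂,
      natDegree_add_le_of_degree_le hQ₁ hQ₂, fun x hx => ?_, fun _ _ => rfl⟩, fun x hx => ?_⟩
  · simpa using (add_pos (hpos₁ x hx) (hpos₂ x hx)).ne'
  · simpa [hR₁ x hx, hR₂ x hx] using add_div_add_mem_openSegment (hpos₁ x hx) (hpos₂ x hx)

theorem exists_forall_abs_sub_lt_of_abs_sub_eq_imp_eq (hf : ContinuousOn f (Set.Icc A B))
    (hR : IsRatFun A B n m R) (hR₁ : IsRatFun A B n m R₁)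
    (hne : ∃ x ∈ Set.Icc A B, R₁ x ≠ R x)
    (hle : ∀ x ∈ Set.Icc A B, |f x - R x| ≤ E)
    (hext : ∀ x ∈ Set.Icc A B, |f x - R x| = E → R₁ x = R x) :
    ∃ S, IsRatFun A B n m S ∧ ∀ x ∈ Set.Icc A B, |f x - S x| < E := by
  obtain ⟨x₀, hx₀, hne₀⟩ := hne
  have hE : 0 < E := (abs_nonneg _).trans_lt ((hle x₀ hx₀).lt_of_ne (mt (hext x₀ hx₀) hne₀))
  obtain ⟨P, Q, hP, hQ, hPQ, hpos, hR⟩ := hR.exists_isCoprime_pos (hx₀.1.trans hx₀.2)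
  obtain ⟨P₁, Q₁, hP₁, hQ₁, hQ₁₀, hR₁⟩ := hR₁
  have hroot : ∀ x ∈ Set.Icc A B, (P₁ * Q - P * Q₁).IsRoot x ↔ R₁ x = R x := fun x hx => by
    rw [hR x hx, hR₁ x hx, div_eq_div_iff (hQ₁₀ x hx) (hpos x hx).ne', IsRoot, eval_sub, eval_mul,
      eval_mul, sub_eq_zero]
  have hw : P₁ * Q - P * Q₁ ≠ 0 := fun h =>
    hne₀ ((hroot x₀ hx₀).1 (by rw [h, IsRoot, eval_zero]))
  have hQne : Q ≠ 0 := by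
    rintro rfl
    simpa using hpos x₀ hx₀
  obtain ⟨v, hv, hinterp⟩ := exists_natDegree_le_eval_eq_of_isRoot hw (f - R)
  obtain ⟨p, q, hp, hq, rfl⟩ :=
    exists_mul_sub_mul_eq_of_natDegree_le hPQ hQne hP hQ hP₁ hQ₁ hv
  have hdir : ∀ x ∈ Set.Icc A B, |f x - R x| = E →
      0 < (f x - R x) * (p.eval x * Q.eval x - P.eval x * q.eval x) := fun x hx hEx => by
    have heval : p.eval x * Q.eval x - P.eval x * q.eval x = f x - R x := by
      simpa using hinterp x ((hroot x hx).2 (hext x hx hEx))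
    rw [heval]
    exact mul_self_pos.2 (abs_pos.1 (hE.trans_eq hEx.symm))
  obtain ⟨t, ht⟩ := (eventually_forall_abs_sub_div_lt (E := E) isCompact_Icc hf P.continuousOn
    Q.continuousOn p.continuousOn q.continuousOn hpos (fun x hx => hR x hx ▸ hle x hx)
    (fun x hx => hR x hx ▸ hdir x hx)).exists
  refine ⟨fun x => (P + C t * p).eval x / (Q + C t * q).eval x,
    ⟨P + C t * p, Q + C t * q,
      natDegree_add_le_of_degree_le hP ((natDegree_C_mul_le t p).trans hp),
      natDegree_add_le_of_degree_le hQ ((natDegree_C_mul_le t q).trans hq),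
      fun x hx => ?_, fun _ _ => rfl⟩, fun x hx => ?_⟩
  · simpa using (ht x hx).1.ne'
  · simpa using (ht x hx).2

theorem exists_forall_abs_sub_lt_of_ne (hf : ContinuousOn f (Set.Icc A B))
    (hR₁ : IsRatFun A B n m R₁) (hR₂ : IsRatFun A B n m R₂)
    (hne : ∃ x ∈ Set.Icc A B, R₁ x ≠ R₂ x)
    (hle₁ : ∀ x ∈ Set.Icc A B, |f x - R₁ x| ≤ E) (hle₂ : ∀ x ∈ Set.Icc A B, |f x - R₂ x| ≤ E) :
    ∃ S, IsRatFun A B n m S ∧ ∀ x ∈ Set.Icc A B, |f x - S x| < E := by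
  obtain ⟨x₀, hx₀, hne₀⟩ := hne
  obtain ⟨R, hR, hmem⟩ := exists_mem_openSegment (hx₀.1.trans hx₀.2) hR₁ hR₂
  have hball₁ : ∀ x ∈ Set.Icc A B, R₁ x ∈ Metric.closedBall (f x) E := fun x hx =>
    Metric.mem_closedBall'.2 (hle₁ x hx)
  have hball₂ : ∀ x ∈ Set.Icc A B, R₂ x ∈ Metric.closedBall (f x) E := fun x hx =>
    Metric.mem_closedBall'.2 (hle₂ x hx)
  refine exists_forall_abs_sub_lt_of_abs_sub_eq_imp_eq hf hR hR₁ ⟨x₀, hx₀, fun h => hne₀ ?_⟩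
    (fun x hx => ?_) fun x hx hEx => ?_
  · exact left_mem_openSegment_iff.1 (h.symm ▸ hmem x₀ hx₀)
  · exact Metric.mem_closedBall'.1 <|
      (convex_closedBall (f x) E).openSegment_subset (hball₁ x hx) (hball₂ x hx) (hmem x hx)
  · have heq : R₁ x = R₂ x := by
      by_contra hne
      have := openSegment_subset_ball_of_ne (hball₁ x hx) (hball₂ x hx) hne (hmem x hx)
      exact (Metric.mem_ball'.1 this).ne hEx
    simpa [← heq, eq_comm] using hmem x hx

theorem abs_sub_le_iSup (hf : ContinuousOn f (Set.Icc A B)) (hR : IsRatFun A B n m R) {x : ℝ}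
    (hx : x ∈ Set.Icc A B) : |f x - R x| ≤ ⨆ y : Set.Icc A B, |f y.1 - R y.1| :=
  le_ciSup_set (isCompact_Icc.bddAbove_image (hf.sub hR.continuousOn).abs) hx

theorem iSup_abs_sub_lt (hAB : A ≤ B) (hf : ContinuousOn f (Set.Icc A B))
    (hR : IsRatFun A B n m R) (hlt : ∀ x ∈ Set.Icc A B, |f x - R x| < E) :
    ⨆ y : Set.Icc A B, |f y.1 - R y.1| < E := by
  rw [← sSup_image' (s := Set.Icc A B) (f := fun x => |f x - R x|)]
  exact (isCompact_Icc.sSup_lt_iff_of_continuous (Set.nonempty_Icc.2 hAB)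
    (hf.sub hR.continuousOn).abs E).2 hlt

end IsRatFun

/-- Uniqueness of the best rational approximant of type (n,m). -/
theorem best_rational_approximant_unique
    (A B : ℝ) (hAB : A < B) (f : ℝ → ℝ) (hf : ContinuousOn f (Set.Icc A B))
    (m n : ℕ) (R₁ R₂ : ℝ → ℝ)
    (h₁ : IsBestApprox A B n m f R₁) (h₂ : IsBestApprox A B n m f R₂) :
    ∀ x ∈ Set.Icc A B, R₁ x = R₂ x := by
  by_contra! hne
  obtain ⟨S, hS, hlt⟩ := IsRatFun.exists_forall_abs_sub_lt_of_ne hf h₁.1 h₂.1 hne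
    (fun x hx => h₁.1.abs_sub_le_iSup hf hx)
    (fun x hx => (h₂.1.abs_sub_le_iSup hf hx).trans (h₂.2 R₁ h₁.1))
  exact (h₁.2 S hS).not_gt (hS.iSup_abs_sub_lt hAB.le hf hlt)
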